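/- arXiv:1002.4920 — 2 statements merged into one kernel-verified Lean document; each statement's English description precedes it below -/
import Mathlib

section
/- Let H be a complex Hilbert space and M a von Neumann algebra acting on H. Let ω : M → ℂ be a positive bounded linear functional with the property that for every ε > 0 there exists a finite-rank orthogonal projection p ∈ M with ω(1 − p) ≤ ε. Let (ρ_i)_{i ∈ I} be a net of positive bounded linear functionals on M with sup_i ‖ρ_i‖ < ∞, such that lim_i ρ_i(x) = ω(x) for every x ∈ M that is a compact operator on H, and lim_i ρ_i(1) = ω(1). Then lim_i ‖ρ_i − ω‖ = 0. -/
open scoped ComplexOrder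


section Helpers
variable {H : Type*} [NormedAddCommGroup H] [InnerProductSpace ℂ H] [CompleteSpace H]

lemma aux_pos (S : StarSubalgebra ℂ (H →L[ℂ] H)) (φ : ↥S →L[ℂ] ℂ)
    (hφ : ∀ a : ↥S, ContinuousLinearMap.IsPositive (a : H →L[ℂ] H) → 0 ≤ φ a) (a : ↥S) :
    0 ≤ φ (star a * a) := by
  apply hφ
  exact ContinuousLinearMap.isPositive_adjoint_comp_self (a : H →L[ℂ] H)

lemma aux_symm (S : StarSubalgebra ℂ (H →L[ℂ] H)) (φ : ↥S →L[ℂ] ℂ)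
    (hφ : ∀ a : ↥S, ContinuousLinearMap.IsPositive (a : H →L[ℂ] H) → 0 ≤ φ a) (a b : ↥S) :
    (starRingEnd ℂ) (φ (star b * a)) = φ (star a * b) := by
  have ha := (Complex.nonneg_iff.1 (aux_pos S φ hφ a)).2
  have hb := (Complex.nonneg_iff.1 (aux_pos S φ hφ b)).2
  have h1 := (Complex.nonneg_iff.1 (aux_pos S φ hφ (a + b))).2
  have h2 := (Complex.nonneg_iff.1 (aux_pos S φ hφ (a + Complex.I • b))).2
  simp only [star_add, star_smul, add_mul, mul_add, map_add, smul_mul_assoc, mul_smul_comm,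
    map_smul, Complex.add_im, smul_eq_mul, Complex.mul_im, Complex.I_re, Complex.I_im,
    Complex.star_def, Complex.conj_I, Complex.neg_re, Complex.neg_im, Complex.mul_re] at h1 h2
  apply Complex.ext
  · simp only [Complex.conj_re]; linarith
  · simp only [Complex.conj_im]; linarith

lemma aux_cs (S : StarSubalgebra ℂ (H →L[ℂ] H)) (φ : ↥S →L[ℂ] ℂ)
    (hφ : ∀ a : ↥S, ContinuousLinearMap.IsPositive (a : H →L[ℂ] H) → 0 ≤ φ a) (a b : ↥S) :
    ‖φ (star a * b)‖ ^ 2 ≤ ‖φ (star a * a)‖ * ‖φ (star b * b)‖ := by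
  let c : PreInnerProductSpace.Core ℂ ↥S :=
    { inner := fun a b => φ (star a * b)
      conj_inner_symm := fun a b => aux_symm S φ hφ a b
      re_inner_nonneg := fun a => (Complex.nonneg_iff.1 (aux_pos S φ hφ a)).1
      add_left := fun a b c => by simp [add_mul]
      smul_left := fun a b r => by simp }
  have h := @InnerProductSpace.Core.inner_mul_inner_self_le ℂ ↥S _ _ _ c a b
  change ‖φ (star a * b)‖ * ‖φ (star b * a)‖ ≤ (φ (star a * a)).re * (φ (star b * b)).re at h
  have h3 : ‖φ (star b * a)‖ = ‖φ (star a * b)‖ := by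
    rw [← aux_symm S φ hφ a b, RCLike.norm_conj]
  rw [h3] at h
  have hb := (Complex.nonneg_iff.1 (aux_pos S φ hφ b)).1
  calc _ = ‖φ (star a * b)‖ * ‖φ (star a * b)‖ := sq _
    _ ≤ _ := h
    _ ≤ _ := mul_le_mul (Complex.re_le_norm _) (Complex.re_le_norm _) hb (norm_nonneg _)

lemma aux_bd (S : StarSubalgebra ℂ (H →L[ℂ] H)) (φ : ↥S →L[ℂ] ℂ)
    (hφ : ∀ a : ↥S, ContinuousLinearMap.IsPositive (a : H →L[ℂ] H) → 0 ≤ φ a)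
    (C : ℝ) (hC : ‖φ‖ ≤ C) (p : ↥S) (hs : star p = p) (hp : p * p = p) (η : ℝ) (hη : 0 ≤ η)
    (hb : ‖φ (1 - p)‖ * C ≤ η ^ 2) (x : ↥S) :
    ‖φ x - φ (p * x * p)‖ ≤ 2 * η * ‖x‖ := by
  have hst : ∀ y : ↥S, ‖star y‖ = ‖y‖ := fun y => norm_star (y : H →L[ℂ] H)
  have hmul : ∀ y z : ↥S, ‖y * z‖ ≤ ‖y‖ * ‖z‖ := fun y z => norm_mul_le _ _
  have hn : ‖p‖ ≤ 1 := by
    have h : ‖p‖ * ‖p‖ = ‖p‖ := by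
      have := CStarRing.norm_star_mul_self (x := (p : H →L[ℂ] H))
      have e : star (p : H →L[ℂ] H) * p = p := by
        have := congrArg Subtype.val (show star p * p = p by rw [hs, hp])
        exact this
      rw [e] at this
      exact this.symm
    nlinarith [norm_nonneg p]
  have hq : star (1 - p) = 1 - p := by rw [star_sub, star_one, hs]
  have hqq : (1 - p) * (1 - p) = 1 - p := by
    rw [mul_sub, sub_mul, sub_mul, hp]; simp
  have hstar : ∀ y : ↥S, ‖y‖ ≤ ‖x‖ → ‖φ (star y * y)‖ ≤ C * ‖x‖ ^ 2 := by
    intro y hy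
    have h0 : 0 ≤ C := (norm_nonneg _).trans hC
    calc _ ≤ ‖φ‖ * ‖star y * y‖ := φ.le_opNorm _
      _ ≤ C * (‖star y‖ * ‖y‖) := by gcongr; exact hmul _ _
      _ = C * ‖y‖ ^ 2 := by rw [hst, sq]
      _ ≤ _ := by gcongr
  have hfin : ∀ t : ℝ, t ^ 2 ≤ ‖φ (1 - p)‖ * (C * ‖x‖ ^ 2) → t ≤ η * ‖x‖ := by
    intro t ht
    refine (le_abs_self t).trans (abs_le_of_sq_le_sq ?_ (by positivity))
    nlinarith [sq_nonneg ‖x‖]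
  have hA : ‖φ ((1 - p) * x)‖ ≤ η * ‖x‖ := by
    apply hfin
    have := aux_cs S φ hφ (1 - p) x
    rw [hq, hqq] at this
    exact this.trans (mul_le_mul_of_nonneg_left (hstar x le_rfl) (norm_nonneg _))
  have hB : ‖φ (p * x * (1 - p))‖ ≤ η * ‖x‖ := by
    apply hfin
    have := aux_cs S φ hφ (star (p * x)) (1 - p)
    rw [hq, hqq] at this
    nth_rewrite 1 [star_star] at this
    rw [mul_comm] at this
    refine this.trans (mul_le_mul_of_nonneg_left (hstar _ ?_) (norm_nonneg _))
    rw [hst]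
    refine (hmul _ _).trans ?_
    nlinarith [norm_nonneg x]
  have e : φ x - φ (p * x * p) = φ ((1 - p) * x) + φ (p * x * (1 - p)) := by
    rw [← map_sub, ← map_add]; congr 1; noncomm_ring
  rw [e]
  refine (norm_add_le _ _).trans ?_
  linarith

/-- compression map -/
noncomputable def aux_T (S : StarSubalgebra ℂ (H →L[ℂ] H)) (p : ↥S) : ↥S →ₗ[ℂ] ↥S :=
  (LinearMap.mulRight ℂ p).comp (LinearMap.mulLeft ℂ p)

lemma aux_fd (S : StarSubalgebra ℂ (H →L[ℂ] H)) (p : ↥S)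
    (hf : FiniteDimensional ℂ ↥(LinearMap.range ((p : H →L[ℂ] H) : H →ₗ[ℂ] H))) :
    FiniteDimensional ℂ ↥(LinearMap.range (aux_T S p)) := by
  let R := LinearMap.range ((p : H →L[ℂ] H) : H →ₗ[ℂ] H)
  let P : H →ₗ[ℂ] R := LinearMap.rangeRestrict ((p : H →L[ℂ] H) : H →ₗ[ℂ] H)
  let F : (R →ₗ[ℂ] R) →ₗ[ℂ] (H →ₗ[ℂ] H) :=
    { toFun := fun A => R.subtype ∘ₗ A ∘ₗ P
      map_add' := fun A B => by ext; simp
      map_smul' := fun A B => by ext; simp }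
  let J : ↥S →ₗ[ℂ] (H →ₗ[ℂ] H) :=
    { toFun := fun a => ((a : H →L[ℂ] H) : H →ₗ[ℂ] H)
      map_add' := fun A B => by ext; simp
      map_smul' := fun A B => by ext; simp }
  have hJ : Function.Injective J := fun a b h => by
    apply Subtype.ext
    ext v
    exact congrArg (fun f : H →ₗ[ℂ] H => f v) h
  have hle : (LinearMap.range (aux_T S p)).map J ≤ LinearMap.range F := by
    rintro _ ⟨_, ⟨x, rfl⟩, rfl⟩
    refine ⟨P ∘ₗ J x ∘ₗ R.subtype, ?_⟩
    ext v
    rfl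
  have : FiniteDimensional ℂ ((LinearMap.range (aux_T S p)).map J) :=
    Submodule.finiteDimensional_of_le hle
  exact LinearEquiv.finiteDimensional
    (Submodule.equivMapOfInjective J hJ (LinearMap.range (aux_T S p))).symm

end Helpers

/-- **Arveson's lemma on convergence of nets of positive normal functionals.**
Let `M` be a von Neumann algebra on `H`, `ω` a positive bounded functional on `M` that is
approximated by finite-rank projections in `M` (the consequence of normality used for direct
sums of type I factors), and `(ρ_i)` a norm-bounded net of positive bounded functionals on `M`
converging to `ω` on the compact operators in `M` and at `1`.  Then `‖ρ_i − ω‖ → 0`. -/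
theorem stmt2
    {H : Type*} [NormedAddCommGroup H] [InnerProductSpace ℂ H] [CompleteSpace H]
    (M : VonNeumannAlgebra H)
    {ι : Type*} [Preorder ι] [IsDirected ι (· ≤ ·)] [Nonempty ι]
    (ω : ↥M.toStarSubalgebra →L[ℂ] ℂ)
    (hωpos : ∀ a : ↥M.toStarSubalgebra,
      ContinuousLinearMap.IsPositive (a : H →L[ℂ] H) → 0 ≤ ω a)
    (hωfr : ∀ ε : ℝ, 0 < ε → ∃ p : H →L[ℂ] H, p ∈ M ∧
      IsSelfAdjoint p ∧ IsIdempotentElem p ∧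
      FiniteDimensional ℂ ↥(LinearMap.range (p : H →ₗ[ℂ] H)) ∧
      ∀ q : ↥M.toStarSubalgebra, (q : H →L[ℂ] H) = 1 - p → ω q ≤ (ε : ℂ))
    (ρ : ι → (↥M.toStarSubalgebra →L[ℂ] ℂ))
    (hρpos : ∀ i, ∀ a : ↥M.toStarSubalgebra,
      ContinuousLinearMap.IsPositive (a : H →L[ℂ] H) → 0 ≤ ρ i a)
    (hbdd : ∃ C : ℝ, ∀ i, ‖ρ i‖ ≤ C)
    (hK : ∀ x : ↥M.toStarSubalgebra, IsCompactOperator ⇑(x : H →L[ℂ] H) →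
      Filter.Tendsto (fun i => ρ i x) Filter.atTop (nhds (ω x)))
    (h1 : Filter.Tendsto (fun i => ρ i 1) Filter.atTop (nhds (ω 1))) :
    Filter.Tendsto (fun i => ‖ρ i - ω‖) Filter.atTop (nhds 0) := by
  obtain ⟨C₀, hC₀⟩ := hbdd
  obtain ⟨C, hC1, hCω, hCρ⟩ : ∃ C : ℝ, 0 < C ∧ ‖ω‖ ≤ C ∧ ∀ i, ‖ρ i‖ ≤ C :=
    ⟨max 1 (max ‖ω‖ C₀), by positivity, by simp, fun i => (hC₀ i).trans (by simp)⟩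
  rw [Metric.tendsto_nhds]
  intro ε hε
  set η : ℝ := ε / 6 with hη
  have hη0 : 0 < η := by positivity
  obtain ⟨p', hpM, hsa, hid, hfd, hle⟩ := hωfr (η ^ 2 / (2 * C)) (by positivity)
  let p : ↥M.toStarSubalgebra := ⟨p', hpM⟩
  have hs : star p = p := Subtype.ext hsa
  have hp : p * p = p := Subtype.ext hid
  have hωp0 : 0 ≤ ω (1 - p) := by
    have hq : star (1 - p) = 1 - p := by rw [star_sub, star_one, hs]
    have hqq : (1 - p) * (1 - p) = 1 - p := by
      rw [mul_sub, sub_mul, sub_mul, hp]; simp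
    have := aux_pos M.toStarSubalgebra ω hωpos (1 - p)
    rwa [hq, hqq] at this
  have hωp : ‖ω (1 - p)‖ ≤ η ^ 2 / (2 * C) := by
    have h := hle (1 - p) rfl
    rw [← Complex.re_eq_norm.2 hωp0]
    exact (Complex.le_def.1 h).1
  have hfr : ∀ y : H →L[ℂ] H,
      FiniteDimensional ℂ ↥(LinearMap.range (y : H →ₗ[ℂ] H)) → IsCompactOperator ⇑y := by
    intro y hy
    let Y : H →L[ℂ] LinearMap.range (y : H →ₗ[ℂ] H) := y.codRestrict _ (fun v => ⟨v, rfl⟩)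
    have hid : IsCompactOperator (id : LinearMap.range (y : H →ₗ[ℂ] H) → _) := by
      have : ProperSpace (LinearMap.range (y : H →ₗ[ℂ] H)) := FiniteDimensional.proper ℂ _
      exact ⟨Metric.closedBall 0 1, isCompact_closedBall _ _,
        Metric.closedBall_mem_nhds _ one_pos⟩
    exact (hid.comp_clm Y).clm_comp (Submodule.subtypeL _)
  have hpc : IsCompactOperator ⇑(p : H →L[ℂ] H) := hfr _ hfd
  have hρp : ∀ᶠ i in Filter.atTop, ‖ρ i (1 - p)‖ < η ^ 2 / C := by
    have : Filter.Tendsto (fun i => ‖ρ i (1 - p)‖) Filter.atTop (nhds ‖ω (1 - p)‖) := by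
      simp only [map_sub]
      exact (h1.sub (hK p hpc)).norm
    apply this.eventually_lt_const
    refine hωp.trans_lt ?_
    apply div_lt_div_of_pos_left <;> [positivity; positivity; linarith]
  have hV := aux_fd M.toStarSubalgebra p hfd
  set V := LinearMap.range (aux_T M.toStarSubalgebra p) with hVdef
  let b := Module.finBasis ℂ V
  obtain ⟨D, hD, hDb⟩ := b.exists_opNorm_le (F := ℂ)
  have hTx : ∀ x, p * x * p = aux_T M.toStarSubalgebra p x := fun x => rfl
  have hcomp : ∀ v : V, IsCompactOperator ⇑((v : ↥M.toStarSubalgebra) : H →L[ℂ] H) := by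
    rintro ⟨_, x, rfl⟩
    have h := hpc.comp_clm ((x : H →L[ℂ] H) * (p : H →L[ℂ] H))
    exact h
  have hev : ∀ᶠ i in Filter.atTop, ∀ j, ‖(ρ i - ω) (b j : ↥M.toStarSubalgebra)‖ < η / D := by
    rw [Filter.eventually_all]
    intro j
    have := ((hK _ (hcomp (b j))).sub_const (ω (b j : ↥M.toStarSubalgebra))).norm
    rw [sub_self, norm_zero] at this
    exact this.eventually_lt_const (by positivity)
  have hpn : ‖p‖ ≤ 1 := by
    have h : ‖p‖ * ‖p‖ = ‖p‖ := by
      have := CStarRing.norm_star_mul_self (x := p')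
      rw [hsa.star_eq, hid.eq] at this
      exact this.symm
    nlinarith [norm_nonneg p]
  filter_upwards [hρp, hev] with i hi1 hi2
  rw [dist_zero_right, norm_norm]
  have hmain : ‖ρ i - ω‖ ≤ 5 * η := by
    refine ContinuousLinearMap.opNorm_le_bound _ (by positivity) (fun x => ?_)
    have hA := aux_bd M.toStarSubalgebra (ρ i) (hρpos i) C (hCρ i) p hs hp η hη0.le
      (by rw [← le_div_iff₀ hC1]; exact hi1.le) x
    have hB := aux_bd M.toStarSubalgebra ω hωpos C hCω p hs hp η hη0.le
      (by
        rw [← le_div_iff₀ hC1]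
        refine hωp.trans ?_
        apply div_le_div_of_nonneg_left <;> [positivity; positivity; linarith]) x
    have hN := hDb (u := (ρ i - ω).comp V.subtypeL) (M := η / D) (by positivity)
      (fun j => (hi2 j).le)
    have hE : ‖(ρ i - ω) (p * x * p)‖ ≤ η * ‖x‖ := by
      have h := ((ρ i - ω).comp V.subtypeL).le_opNorm ⟨p * x * p, ⟨x, rfl⟩⟩
      have h2 : ‖p * x * p‖ ≤ ‖x‖ := by
        have e1 : ‖p * x * p‖ ≤ ‖p * x‖ * ‖p‖ := norm_mul_le _ _
        have e2 : ‖p * x‖ ≤ ‖p‖ * ‖x‖ := norm_mul_le _ _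
        nlinarith [norm_nonneg p, norm_nonneg x, norm_nonneg (p * x)]
      have h3 : D * (η / D) = η := by field_simp
      rw [h3] at hN
      exact h.trans (mul_le_mul hN h2 (norm_nonneg _) hη0.le)
    have e : (ρ i - ω) x = (ρ i x - ρ i (p * x * p)) - (ω x - ω (p * x * p))
        + (ρ i - ω) (p * x * p) := by
      simp only [sub_apply]; ring
    rw [e]
    refine (norm_add_le _ _).trans ?_
    have := norm_sub_le (ρ i x - ρ i (p * x * p)) (ω x - ω (p * x * p))
    linarith
  linarith
end

section
/- Let d ≥ 1, k ≥ 1, and let Λ ⊆ {1,…,d}^ℤ be a nonempty k-step subshift of finite type with language Λ*. Let H_Λ := ℓ²(Λ*) with orthonormal basis (e_γ)_{γ ∈ Λ*}, let S_i ∈ B(H_Λ) be determined by S_i e_γ = e_{iγ} if iγ ∈ Λ* and 0 otherwise, and let 𝒯_Λ be the unital C*-subalgebra of B(H_Λ) generated by S₁,…,S_d. Let H be a complex Hilbert space and T₁,…,T_d ∈ B(H); for a word α = α₁⋯α_m write T^α := T_{α₁}⋯T_{α_m} (empty product = 1). Then the following are equivalent: (a) there exists a unital *-homomorphism π : 𝒯_Λ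 → B(H) with π(S_i) = T_i for all i and π(K) = 0 for every compact operator K ∈ 𝒯_Λ; (b) the tuple (T₁,…,T_d) satisfies the relations: T^α = 0 for every word α ∉ Λ*; T_i* T_j = 0 for all i ≠ j; Σ_{i=1}^d T_i T_i* = 1; and T_i* T_i = Σ_{α ∈ E_i^k} T^α (T^α)* for every i. Moreover, the homomorphism π in (a) is uniquely determined by T₁,…,T_d. -/
noncomputable section

/-- A finite word occurs as a block of consecutive entries of a bi-infinite sequence. -/
def OccursIn {d : ℕ} (w : List (Fin d)) (x : ℤ → Fin d) : Prop :=
  ∃ m : ℤ, ∀ i : Fin w.length, x (m + (i : ℕ)) = w.get i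

/-- The language of `Λ ⊆ {1,…,d}^ℤ`: all finite words occurring as blocks of points of `Λ`. -/
def lang {d : ℕ} (Λ : Set (ℤ → Fin d)) : Set (List (Fin d)) :=
  {w | ∃ x ∈ Λ, OccursIn w x}

/-- `Λ` is a `k`-step subshift of finite type. -/
def IsKStepSFT {d : ℕ} (k : ℕ) (Λ : Set (ℤ → Fin d)) : Prop :=
  ∃ W : Set (List (Fin d)), W.Finite ∧ (∀ w ∈ W, w ≠ [] ∧ w.length ≤ k + 1) ∧
    Λ = {x | ∀ w ∈ W, ¬ OccursIn w x}

/-- `H_Λ = ℓ²(Λ*)`, the Fock space of the subshift. -/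
abbrev ShiftSp {d : ℕ} (Λ : Set (ℤ → Fin d)) : Type := lp (fun _ : ↥(lang Λ) => ℂ) 2

/-- The standard basis vector `e_γ` of `ℓ²(Λ*)`. -/
def eVec {d : ℕ} (Λ : Set (ℤ → Fin d)) (γ : ↥(lang Λ)) : ShiftSp Λ := lp.single 2 γ 1

/-- `T^α = T_{α₁} ⋯ T_{α_m}` (empty product `= 1`). -/
def wordOp {d : ℕ} {A : Type*} [Monoid A] (T : Fin d → A) (α : List (Fin d)) : A :=
  (α.map T).prod

/-- `E_i^k = {α ∈ Λ^k : iα ∈ Λ*}`. -/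
def Eik {d : ℕ} (Λ : Set (ℤ → Fin d)) (k : ℕ) (i : Fin d) : Set (List (Fin d)) :=
  {α | α ∈ lang Λ ∧ α.length = k ∧ (i :: α) ∈ lang Λ}

/-- `𝒯_Λ`: the unital C*-subalgebra of `B(ℓ²(Λ*))` generated by the creation operators. -/
def genAlg {d : ℕ} (Λ : Set (ℤ → Fin d)) (S : Fin d → ShiftSp Λ →L[ℂ] ShiftSp Λ) :
    StarSubalgebra ℂ (ShiftSp Λ →L[ℂ] ShiftSp Λ) :=
  (StarAlgebra.adjoin ℂ (Set.range S)).topologicalClosure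

theorem lang_append {d : ℕ} {Λ : Set (ℤ → Fin d)} {u v : List (Fin d)} (h : u ++ v ∈ lang Λ) :
    u ∈ lang Λ ∧ v ∈ lang Λ := by
  obtain ⟨x, hx, m, hm⟩ := h
  refine ⟨⟨x, hx, m, fun i => ?_⟩, ⟨x, hx, m + u.length, fun i => ?_⟩⟩
  · have := hm ⟨i, by simp; omega⟩
    simp only [List.get_eq_getElem] at this ⊢
    rw [this, List.getElem_append_left]
  · have := hm ⟨u.length + i, by simp⟩
    simp only [List.get_eq_getElem] at this ⊢
    rw [List.getElem_append_right (by simp)] at this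
    simpa [add_assoc] using this

theorem lang_nil {d : ℕ} {Λ : Set (ℤ → Fin d)} (h : Λ.Nonempty) : [] ∈ lang Λ := by
  obtain ⟨x, hx⟩ := h
  exact ⟨x, hx, 0, fun i => i.elim0⟩

theorem lang_tail {d : ℕ} {Λ : Set (ℤ → Fin d)} {i : Fin d} {v : List (Fin d)}
    (h : i :: v ∈ lang Λ) : v ∈ lang Λ :=
  (lang_append (u := [i]) (v := v) h).2

theorem lang_glue {d k : ℕ} {Λ : Set (ℤ → Fin d)} (hΛ : IsKStepSFT k Λ) {i : Fin d}
    {α δ : List (Fin d)} (hα : α.length = k) (h1 : i :: α ∈ lang Λ) (h2 : α ++ δ ∈ lang Λ) :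
    i :: (α ++ δ) ∈ lang Λ := by
  obtain ⟨W, -, hW, rfl⟩ := hΛ
  obtain ⟨x, hx, m, hm⟩ := h1
  obtain ⟨y, hy, p, hp⟩ := h2
  have hm' : ∀ n (h : n < (i :: α).length), x (m + n) = (i :: α)[n] := fun n h => hm ⟨n, h⟩
  have hp' : ∀ n (h : n < (α ++ δ).length), y (p + n) = (α ++ δ)[n] := fun n h => hp ⟨n, h⟩
  set z : ℤ → Fin d := fun t => if t ≤ m + k then x t else y (t - m - 1 + p) with hz
  have zx : ∀ t, t ≤ m + k → z t = x t := fun t ht => by simp [hz, ht]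
  have zy : ∀ t, m + 1 ≤ t → z t = y (t - m - 1 + p) := by
    intro t ht
    by_cases h : t ≤ m + k
    · rw [zx t h]
      obtain ⟨n, rfl⟩ : ∃ n : ℕ, t = m + (n + 1 : ℕ) := ⟨(t - m - 1).toNat, by push_cast; omega⟩
      have hn : n < α.length := by push_cast at h; omega
      rw [hm' (n + 1) (by simpa using hn)]
      have := hp' n (by simp; omega)
      rw [List.getElem_append_left hn] at this
      rw [show m + ((n + 1 : ℕ) : ℤ) - m - 1 + p = p + n by push_cast; ring, this]
      simp
    · simp [hz, h]
  refine ⟨z, ?_, m, ?_⟩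
  · rintro w hw ⟨q, hq⟩
    have hl := (hW w hw).2
    by_cases h : q ≤ m
    · refine hx w hw ⟨q, fun j => ?_⟩
      rw [← hq j, zx]
      have := j.2
      omega
    · refine hy w hw ⟨q - m - 1 + p, fun j => ?_⟩
      rw [← hq j, zy _ (by omega)]
      congr 1; ring
  · rintro ⟨n, hn⟩
    simp only [List.get_eq_getElem]
    rcases n with _ | n
    · rw [zx _ (by push_cast; omega), hm' 0 (by simp)]; simp
    · rw [zy _ (by push_cast; omega)]
      have := hp' n (by simpa using hn)
      rw [show m + ((n + 1 : ℕ) : ℤ) - m - 1 + p = p + n by push_cast; ring, this]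
      simp

open Classical in
def ev {d : ℕ} (Λ : Set (ℤ → Fin d)) (w : List (Fin d)) : ShiftSp Λ :=
  if h : w ∈ lang Λ then eVec Λ ⟨w, h⟩ else 0

theorem ev_mem {d : ℕ} {Λ : Set (ℤ → Fin d)} {w : List (Fin d)} (h : w ∈ lang Λ) :
    ev Λ w = eVec Λ ⟨w, h⟩ := by simp [ev, h]

theorem ev_not {d : ℕ} {Λ : Set (ℤ → Fin d)} {w : List (Fin d)} (h : w ∉ lang Λ) :
    ev Λ w = 0 := by simp [ev, h]

theorem inner_eVec {d : ℕ} {Λ : Set (ℤ → Fin d)} (γ : ↥(lang Λ)) (x : ShiftSp Λ) :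
    inner ℂ (eVec Λ γ) x = x γ := by
  rw [eVec, lp.inner_single_left]; simp

theorem ev_coord {d : ℕ} {Λ : Set (ℤ → Fin d)} (γ : ↥(lang Λ)) (w : List (Fin d)) :
    (ev Λ w) γ = if w = γ then 1 else 0 := by
  by_cases h : w ∈ lang Λ
  · rw [ev_mem h, eVec, lp.coeFn_single, Pi.single_apply]
    simp [Subtype.ext_iff, eq_comm]
  · have : w ≠ γ := fun e => h (e ▸ γ.2)
    simp [ev_not h, this]

theorem vec_ext {d : ℕ} {Λ : Set (ℤ → Fin d)} {x y : ShiftSp Λ}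
    (h : ∀ u, u ∈ lang Λ → inner ℂ (ev Λ u) x = inner ℂ (ev Λ u) y) : x = y := by
  apply lp.ext
  funext γ
  have := h γ γ.2
  rwa [ev_mem γ.2, inner_eVec, inner_eVec] at this

theorem inner_ev {d : ℕ} {Λ : Set (ℤ → Fin d)} (u w : List (Fin d)) (hu : u ∈ lang Λ) :
    inner ℂ (ev Λ u) (ev Λ w) = if w = u then 1 else 0 := by
  rw [ev_mem hu, inner_eVec, ev_coord]

theorem clm_ext {d : ℕ} {Λ : Set (ℤ → Fin d)} {X Y : ShiftSp Λ →L[ℂ] ShiftSp Λ}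
    (h : ∀ w, w ∈ lang Λ → X (ev Λ w) = Y (ev Λ w)) : X = Y := by
  ext1 x
  have hs := lp.hasSum_single (E := fun _ : ↥(lang Λ) => ℂ) (p := 2) (by simp) x
  have e : ∀ γ : ↥(lang Λ), lp.single (E := fun _ : ↥(lang Λ) => ℂ) 2 γ (x γ) = x γ • ev Λ γ := by
    intro γ
    rw [ev_mem γ.2, eVec, ← lp.single_smul]
    simp
  simp_rw [e] at hs
  have h1 := hs.mapL X
  have h2 := hs.mapL Y
  simp only [map_smul] at h1 h2
  refine h1.unique ?_
  convert h2 using 3 with γ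
  exact h γ γ.2

section shift
variable {d : ℕ} {Λ : Set (ℤ → Fin d)} {S : Fin d → ShiftSp Λ →L[ℂ] ShiftSp Λ}

/-- The creation operators act on the (extended) basis by concatenation. -/
def IsCr (Λ : Set (ℤ → Fin d)) (S : Fin d → ShiftSp Λ →L[ℂ] ShiftSp Λ) : Prop :=
  ∀ i w, S i (ev Λ w) = ev Λ (i :: w)

theorem isCr_of
    (hS1 : ∀ (i : Fin d) (γ : ↥(lang Λ)) (h : (i :: (γ : List (Fin d))) ∈ lang Λ),
      S i (eVec Λ γ) = eVec Λ ⟨i :: (γ : List (Fin d)), h⟩)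
    (hS0 : ∀ (i : Fin d) (γ : ↥(lang Λ)), (i :: (γ : List (Fin d))) ∉ lang Λ →
      S i (eVec Λ γ) = 0) : IsCr Λ S := by
  intro i w
  by_cases hw : w ∈ lang Λ
  · rw [ev_mem hw]
    by_cases h : i :: w ∈ lang Λ
    · rw [ev_mem h, hS1 i ⟨w, hw⟩ h]
    · rw [ev_not h, hS0 i ⟨w, hw⟩ h]
  · rw [ev_not hw, ev_not (fun h => hw (lang_tail h)), map_zero]

theorem wordOp_cons {A : Type*} [Monoid A] (T : Fin d → A) (i : Fin d) (α : List (Fin d)) :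
    wordOp T (i :: α) = T i * wordOp T α := by simp [wordOp]

theorem wordOp_nil {A : Type*} [Monoid A] (T : Fin d → A) : wordOp T [] = 1 := by simp [wordOp]

theorem wordOp_append {A : Type*} [Monoid A] (T : Fin d → A) (β α : List (Fin d)) :
    wordOp T (β ++ α) = wordOp T β * wordOp T α := by simp [wordOp]

theorem wordOp_ev (h : IsCr Λ S) (β w : List (Fin d)) :
    wordOp S β (ev Λ w) = ev Λ (β ++ w) := by
  induction β with
  | nil => simp [wordOp_nil]
  | cons i β ih => rw [wordOp_cons, mul_apply_eq_comp, ih, h]; rfl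

theorem inner_star_word (h : IsCr Λ S) (β u w : List (Fin d)) :
    inner ℂ (ev Λ u) (star (wordOp S β) (ev Λ w)) = inner ℂ (ev Λ (β ++ u)) (ev Λ w) := by
  rw [ContinuousLinearMap.star_eq_adjoint, ContinuousLinearMap.adjoint_inner_right, wordOp_ev h]

open Classical in
theorem star_word_ev (h : IsCr Λ S) (β w : List (Fin d)) :
    star (wordOp S β) (ev Λ (β ++ w)) = if β ++ w ∈ lang Λ then ev Λ w else 0 := by
  apply vec_ext
  intro u hu
  rw [inner_star_word h]
  by_cases hw : β ++ w ∈ lang Λ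
  · by_cases hbu : β ++ u ∈ lang Λ
    · rw [inner_ev _ _ hbu, if_pos hw, inner_ev _ _ hu]; simp
    · rw [ev_not hbu, if_pos hw, inner_ev _ _ hu, if_neg]
      · simp
      · rintro rfl; exact hbu hw
  · rw [if_neg hw, ev_not hw]; simp

theorem star_word_ev_ne (h : IsCr Λ S) (β w : List (Fin d)) (hw : ∀ u, w ≠ β ++ u) :
    star (wordOp S β) (ev Λ w) = 0 := by
  apply vec_ext
  intro u hu
  rw [inner_star_word h]
  by_cases hbu : β ++ u ∈ lang Λ
  · rw [inner_ev _ _ hbu, if_neg (hw u)]; simp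
  · rw [ev_not hbu]; simp

theorem star_ev_cons (h : IsCr Λ S) (i : Fin d) (w : List (Fin d)) (hw : i :: w ∈ lang Λ) :
    star (S i) (ev Λ (i :: w)) = ev Λ w := by
  have := star_word_ev h [i] w
  simpa [wordOp, hw] using this

theorem star_ev_ne (h : IsCr Λ S) (i : Fin d) (w : List (Fin d)) (hw : ∀ u, w ≠ i :: u) :
    star (S i) (ev Λ w) = 0 := by
  have := star_word_ev_ne h [i] w (by simpa using hw)
  simpa [wordOp] using this

theorem word_not_mem (h : IsCr Λ S) {α : List (Fin d)} (hα : α ∉ lang Λ) : wordOp S α = 0 := by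
  apply clm_ext
  intro w hw
  rw [wordOp_ev h, ev_not (fun hh => hα (lang_append hh).1)]; simp

theorem star_mul_ne (h : IsCr Λ S) {i j : Fin d} (hij : i ≠ j) : star (S i) * S j = 0 := by
  apply clm_ext
  intro w hw
  rw [mul_apply_eq_comp, h, star_ev_ne h]
  · simp
  · intro u hu
    simp at hu
    exact hij hu.1.symm

theorem sum_range_ev (h : IsCr Λ S) (w : List (Fin d)) (hw : w ∈ lang Λ) (h0 : w ≠ []) :
    (1 - ∑ i : Fin d, S i * star (S i)) (ev Λ w) = 0 := by
  obtain ⟨j, v, rfl⟩ := List.exists_cons_of_ne_nil h0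
  rw [_root_.sub_apply, _root_.sum_apply, Finset.sum_eq_single j]
  · simp [star_ev_cons h j v hw, h j v]
  · intro b _ hb
    rw [mul_apply_eq_comp, star_ev_ne h]
    · simp
    · intro u hu
      simp at hu
      exact hb hu.1.symm
  · simp

/-- the projection `(S^β)^* S^β` -/
def Qp (S : Fin d → ShiftSp Λ →L[ℂ] ShiftSp Λ) (β : List (Fin d)) : ShiftSp Λ →L[ℂ] ShiftSp Λ :=
  star (wordOp S β) * wordOp S β

open Classical in
theorem Qp_ev (h : IsCr Λ S) (β w : List (Fin d)) :
    Qp S β (ev Λ w) = if β ++ w ∈ lang Λ then ev Λ w else 0 := by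
  rw [Qp, mul_apply_eq_comp, wordOp_ev h, star_word_ev h]

theorem Qp_comm (h : IsCr Λ S) (β : List (Fin d)) (i : Fin d) :
    Qp S β * S i = S i * Qp S (β ++ [i]) := by
  apply clm_ext
  intro w hw
  rw [mul_apply_eq_comp, mul_apply_eq_comp, h, Qp_ev h, Qp_ev h]
  by_cases hh : β ++ i :: w ∈ lang Λ
  · rw [if_pos hh, if_pos (by simpa using hh), h]
  · rw [if_neg hh, if_neg (by simpa using hh), map_zero]

theorem Eik_finite (k : ℕ) (i : Fin d) : (Eik Λ k i).Finite :=
  (List.finite_length_eq (Fin d) k).subset (fun _ h => h.2.1)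

/-- the defect operator -/
def Fd (Λ : Set (ℤ → Fin d)) (S : Fin d → ShiftSp Λ →L[ℂ] ShiftSp Λ) (k : ℕ) (i : Fin d) :
    ShiftSp Λ →L[ℂ] ShiftSp Λ :=
  star (S i) * S i - ∑ α ∈ (Eik_finite (Λ := Λ) k i).toFinset, wordOp S α * star (wordOp S α)

theorem Fd_ev (h : IsCr Λ S) {k : ℕ} (hΛ : IsKStepSFT k Λ) (i : Fin d) (w : List (Fin d))
    (hw : w ∈ lang Λ) (hk : k ≤ w.length) : Fd Λ S k i (ev Λ w) = 0 := by
  obtain ⟨α, δ, hα, rfl⟩ : ∃ α δ : List (Fin d), α.length = k ∧ w = α ++ δ :=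
    ⟨w.take k, w.drop k, by simp [hk], by simp⟩
  have hne : ∀ β ∈ (Eik_finite (Λ := Λ) k i).toFinset, β ≠ α →
      (wordOp S β * star (wordOp S β)) (ev Λ (α ++ δ)) = 0 := by
    intro β hβ hβα
    rw [mul_apply_eq_comp, star_word_ev_ne h, map_zero]
    intro u hu
    have hl : β.length = k := ((Eik_finite (Λ := Λ) k i).mem_toFinset.1 hβ).2.1
    exact hβα (List.append_inj hu (by omega)).1.symm
  have hα' := (lang_append hw).1
  rw [Fd, _root_.sub_apply, _root_.sum_apply,
    mul_apply_eq_comp, h]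
  by_cases hi : i :: α ∈ lang Λ
  · have hmem : α ∈ (Eik_finite (Λ := Λ) k i).toFinset :=
      (Eik_finite (Λ := Λ) k i).mem_toFinset.2 ⟨hα', hα, hi⟩
    rw [star_ev_cons h _ _ (lang_glue hΛ hα hi hw), Finset.sum_eq_single_of_mem α hmem hne]
    rw [mul_apply_eq_comp, star_word_ev h, if_pos hw, wordOp_ev h, sub_self]
  · rw [Finset.sum_eq_zero, ev_not, map_zero, sub_zero]
    · intro hh
      exact hi (lang_append (u := i :: α) (v := δ) hh).1
    · intro β hβ
      apply hne β hβ
      rintro rfl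
      exact hi ((Eik_finite (Λ := Λ) k i).mem_toFinset.1 hβ).2.2

theorem Fd_word (h : IsCr Λ S) {k : ℕ} (hΛ : IsKStepSFT k Λ) (i : Fin d) (β : List (Fin d))
    (hβ : β.length = k) : Fd Λ S k i * wordOp S β = 0 := by
  apply clm_ext
  intro w _
  rw [mul_apply_eq_comp, wordOp_ev h]
  by_cases hw : β ++ w ∈ lang Λ
  · rw [Fd_ev h hΛ i _ hw (by simp; omega)]; simp
  · rw [ev_not hw]; simp

/-- coordinate projection -/
def PF (Λ : Set (ℤ → Fin d)) (F : Finset ↥(lang Λ)) : ShiftSp Λ →L[ℂ] ShiftSp Λ :=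
  ∑ γ ∈ F, InnerProductSpace.rankOne ℂ (ev Λ γ) (ev Λ γ)

theorem PF_apply (F : Finset ↥(lang Λ)) (x : ShiftSp Λ) :
    PF Λ F x = ∑ γ ∈ F, lp.single (E := fun _ : ↥(lang Λ) => ℂ) 2 γ (x γ) := by
  rw [PF, _root_.sum_apply]
  refine Finset.sum_congr rfl fun γ _ => ?_
  rw [InnerProductSpace.rankOne_apply, ev_mem γ.2, inner_eVec, eVec, ← lp.single_smul]
  simp

theorem PF_norm (F : Finset ↥(lang Λ)) (x : ShiftSp Λ) : ‖x - PF Λ F x‖ ≤ ‖x‖ := by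
  have := lp.norm_sub_norm_compl_sub_single (E := fun _ : ↥(lang Λ) => ℂ) (p := 2) (by simp) x F
  rw [← PF_apply] at this
  have h2 : 0 ≤ ∑ i ∈ F, ‖x i‖ ^ (2 : ENNReal).toReal :=
    Finset.sum_nonneg fun _ _ => by positivity
  rw [← this] at h2
  simp only [ENNReal.toReal_ofNat, Real.rpow_ofNat] at h2
  exact le_of_sq_le_sq (by linarith) (norm_nonneg _)

theorem PF_tendsto (x : ShiftSp Λ) :
    Filter.Tendsto (fun F => PF Λ F x) Filter.atTop (nhds x) := by
  have hs := lp.hasSum_single (E := fun _ : ↥(lang Λ) => ℂ) (p := 2) (by simp) x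
  simp_rw [PF_apply]
  exact hs

theorem compact_approx (X : ShiftSp Λ →L[ℂ] ShiftSp Λ) (hX : IsCompactOperator X)
    {ε : ℝ} (hε : 0 < ε) : ∃ F, ‖X - PF Λ F * X‖ ≤ ε := by
  obtain ⟨K, hK, hKX⟩ := hX.image_closedBall_subset_compact (𝕜₁ := ℂ) (f := X.toLinearMap) 1
  obtain ⟨t, htK, htf, hcov⟩ := hK.finite_cover_balls (half_pos hε)
  have hev : ∀ᶠ F in Filter.atTop, ∀ y ∈ t, ‖y - PF Λ F y‖ < ε / 2 := by
    rw [Filter.eventually_all_finite htf]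
    intro y _
    have := (PF_tendsto (Λ := Λ) y).eventually (Metric.ball_mem_nhds y (half_pos hε))
    filter_upwards [this] with F hF
    rw [dist_comm, dist_eq_norm] at hF
    exact hF
  obtain ⟨F, hF⟩ := hev.exists
  refine ⟨F, ContinuousLinearMap.opNorm_le_of_unit_norm (𝕜 := ℂ) hε.le fun x hx => ?_⟩
  have hxK : X x ∈ K := hKX ⟨x, by simp [hx], rfl⟩
  obtain ⟨y, hy, hxy⟩ : ∃ y ∈ t, X x ∈ Metric.ball y (ε / 2) := by
    simpa using hcov hxK
  rw [Metric.mem_ball, dist_eq_norm] at hxy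
  have e : (X - PF Λ F * X) x = ((X x - y) - PF Λ F (X x - y)) + (y - PF Λ F y) := by
    simp only [_root_.sub_apply, mul_apply_eq_comp, map_sub]
    abel
  rw [e]
  refine (norm_add_le _ _).trans ?_
  have := PF_norm (Λ := Λ) F (X x - y)
  have := hF y hy
  linarith

theorem isCompact_rankOne (x y : ShiftSp Λ) :
    IsCompactOperator (InnerProductSpace.rankOne ℂ x y) := by
  rw [InnerProductSpace.rankOne_def']
  have : IsCompactOperator (innerSL ℂ y) :=
    isCompactOperator_of_locallyCompactSpace_dom (innerSL ℂ y)
  exact this.clm_comp (ContinuousLinearMap.toSpanSingleton ℂ x)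

theorem isCompact_of_ev (X : ShiftSp Λ →L[ℂ] ShiftSp Λ) (k : ℕ)
    (hX : ∀ w ∈ lang Λ, k ≤ w.length → X (ev Λ w) = 0) : IsCompactOperator X := by
  have hfin : {γ : ↥(lang Λ) | γ.1.length < k}.Finite :=
    (List.finite_length_lt (Fin d) k).preimage Subtype.val_injective.injOn
  have e : X = X * PF Λ hfin.toFinset := by
    apply clm_ext
    intro w hw
    rw [mul_apply_eq_comp, PF_apply]
    by_cases hk : k ≤ w.length
    · rw [hX w hw hk, Finset.sum_eq_zero, map_zero]
      intro γ hγ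
      have : w ≠ γ := by rintro rfl; simp at hγ; omega
      simp [ev_coord, this]
    · rw [Finset.sum_eq_single_of_mem ⟨w, hw⟩ (by simp; omega)]
      · congr 1
        simp [ev_mem hw, eVec]
      · intro γ _ hγ
        have : w ≠ γ := by rintro rfl; exact hγ rfl
        simp [ev_coord, this]
  rw [e, PF, Finset.mul_sum]
  have : ∀ F : Finset ↥(lang Λ), IsCompactOperator
      (∑ γ ∈ F, X * InnerProductSpace.rankOne ℂ (ev Λ γ) (ev Λ γ) : ShiftSp Λ →L[ℂ] ShiftSp Λ) := by
    intro F
    induction F using Finset.induction_on with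
    | empty => simpa using isCompactOperator_zero
    | insert a s ha ih =>
      rw [Finset.sum_insert ha]
      exact ((isCompact_rankOne _ _).clm_comp X).add ih
  exact this _

end shift

open TensorProduct in
theorem inner_rT {E H : Type*} [NormedAddCommGroup E] [InnerProductSpace ℂ E] [CompleteSpace E]
    [NormedAddCommGroup H] [InnerProductSpace ℂ H] (X : E →L[ℂ] E) (u v : E ⊗[ℂ] H) :
    inner ℂ (X.rTensor H u) v = inner ℂ u ((star X).rTensor H v) := by
  induction u using TensorProduct.induction_on with
  | zero => simp only [map_zero, inner_zero_left]
  | add a b ha hb => simp only [map_add, inner_add_left, ha, hb]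
  | tmul x y =>
    induction v using TensorProduct.induction_on with
    | zero => simp only [map_zero, inner_zero_right]
    | add a b ha hb => simp only [map_add, inner_add_right, ha, hb]
    | tmul z w =>
      rw [ContinuousLinearMap.rTensor_tmul, ContinuousLinearMap.rTensor_tmul,
        TensorProduct.inner_tmul, TensorProduct.inner_tmul,
        ContinuousLinearMap.star_eq_adjoint, ContinuousLinearMap.adjoint_inner_right]

theorem inner_rT' {E H : Type*} [NormedAddCommGroup E] [InnerProductSpace ℂ E] [CompleteSpace E]
    [NormedAddCommGroup H] [InnerProductSpace ℂ H] (X : E →L[ℂ] E) (u v : TensorProduct ℂ E H) :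
    inner ℂ u (X.rTensor H v) = inner ℂ ((star X).rTensor H u) v := by
  rw [inner_rT, star_star]

section rep
variable {d : ℕ} {Λ : Set (ℤ → Fin d)} {S : Fin d → ShiftSp Λ →L[ℂ] ShiftSp Λ}
  {H : Type} [NormedAddCommGroup H] [InnerProductSpace ℂ H] [CompleteSpace H]
  {T : Fin d → H →L[ℂ] H}

def Vn (S : Fin d → ShiftSp Λ →L[ℂ] ShiftSp Λ) (T : Fin d → H →L[ℂ] H) :
    ℕ → H →L[ℂ] (TensorProduct ℂ (ShiftSp Λ) H)
  | 0 => TensorProduct.mkL ℂ _ _ (ev Λ [])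
  | n + 1 => ∑ i, ((S i).rTensor H).comp ((Vn S T n).comp (star (T i)))

theorem Vn_zero (x : H) : Vn S T 0 x = TensorProduct.tmul ℂ (ev Λ []) x := rfl

theorem Vn_succ (n : ℕ) (x : H) :
    Vn S T (n + 1) x = ∑ i, (S i).rTensor H (Vn S T n (star (T i) x)) := by
  simp only [Vn, _root_.sum_apply, ContinuousLinearMap.comp_apply]

/-- The relations on `T` needed for the construction. -/
structure CKRel (Λ : Set (ℤ → Fin d)) (k : ℕ) (T : Fin d → H →L[ℂ] H) : Prop where
  word : ∀ α : List (Fin d), α ∉ lang Λ → wordOp T α = 0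
  sum : (∑ i : Fin d, T i * star (T i)) = 1
  eik : ∀ i : Fin d, star (T i) * T i =
    ∑ α ∈ (Eik_finite (Λ := Λ) k i).toFinset, wordOp T α * star (wordOp T α)

theorem rT_mul (X Y : ShiftSp Λ →L[ℂ] ShiftSp Λ) (u : TensorProduct ℂ (ShiftSp Λ) H) :
    X.rTensor H (Y.rTensor H u) = (X * Y).rTensor H u := by
  rw [ContinuousLinearMap.rTensor_mul]; rfl

theorem star_app_append (β : List (Fin d)) (i : Fin d) (x : H) :
    star (T i) (star (wordOp T β) x) = star (wordOp T (β ++ [i])) x := by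
  rw [wordOp_append, star_mul]
  simp [wordOp]

theorem Vn_Q (hne : Λ.Nonempty) (hS : IsCr Λ S) {k : ℕ} (hT : CKRel Λ k T) (n : ℕ)
    (β : List (Fin d)) (x : H) :
    (Qp S β).rTensor H (Vn S T n (star (wordOp T β) x)) = Vn S T n (star (wordOp T β) x) := by
  induction n generalizing β with
  | zero =>
    rw [Vn_zero, ContinuousLinearMap.rTensor_tmul, Qp_ev hS]
    by_cases hβ : β ∈ lang Λ
    · rw [if_pos (by simpa using hβ)]
    · rw [hT.word β hβ]; simp
  | succ n ih =>
    rw [Vn_succ, map_sum]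
    refine Finset.sum_congr rfl fun i _ => ?_
    rw [star_app_append, rT_mul, Qp_comm hS, ← rT_mul, ih]

theorem Vn_star_succ (hne : Λ.Nonempty) (hS : IsCr Λ S) {k : ℕ} (hT : CKRel Λ k T) (n : ℕ)
    (j : Fin d) (x : H) :
    (star (S j)).rTensor H (Vn S T (n + 1) x) = Vn S T n (star (T j) x) := by
  rw [Vn_succ, map_sum, Finset.sum_eq_single j]
  · have := Vn_Q hne hS hT n [j] x
    rw [rT_mul]
    simpa [-ContinuousLinearMap.rTensor_apply, Qp, wordOp] using this
  · intro i _ hi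
    rw [rT_mul, star_mul_ne hS hi.symm]; simp
  · simp

theorem Vn_star_zero (hS : IsCr Λ S) (j : Fin d) (x : H) :
    (star (S j)).rTensor H (Vn S T 0 x) = 0 := by
  rw [Vn_zero, ContinuousLinearMap.rTensor_tmul, star_ev_ne hS j [] (by simp)]
  simp

theorem Vn_inner (hne : Λ.Nonempty) (hS : IsCr Λ S) {k : ℕ} (hT : CKRel Λ k T) (n m : ℕ)
    (x y : H) : inner ℂ (Vn S T n x) (Vn S T m y) = if n = m then inner ℂ x y else 0 := by
  induction n generalizing m x y with
  | zero =>
    rcases m with _ | m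
    · rw [Vn_zero, Vn_zero, TensorProduct.inner_tmul, inner_ev _ _ (lang_nil hne)]
      simp
    · rw [Vn_succ, inner_sum, Finset.sum_eq_zero]
      · simp
      · intro i _
        rw [inner_rT', Vn_star_zero hS, inner_zero_left]
  | succ n ih =>
    rw [Vn_succ, sum_inner]
    rcases m with _ | m
    · rw [Finset.sum_eq_zero]
      · simp
      · intro i _
        rw [inner_rT, Vn_star_zero hS, inner_zero_right]
    · have : ∀ i, inner ℂ ((S i).rTensor H (Vn S T n (star (T i) x))) (Vn S T (m + 1) y) =
          if n = m then inner ℂ x ((T i * star (T i)) y) else 0 := by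
        intro i
        rw [inner_rT, Vn_star_succ hne hS hT, ih, mul_apply_eq_comp,
          ContinuousLinearMap.star_eq_adjoint, ContinuousLinearMap.adjoint_inner_left]
      simp_rw [this]
      by_cases hnm : n = m
      · simp only [hnm, if_true]
        rw [← inner_sum, ← _root_.sum_apply, hT.sum]; rfl
      · simp [hnm]

theorem Vn_norm (hne : Λ.Nonempty) (hS : IsCr Λ S) {k : ℕ} (hT : CKRel Λ k T) (n : ℕ)
    (x : H) : ‖Vn S T n x‖ = ‖x‖ := by
  have := Vn_inner hne hS hT n n x x
  rw [if_pos rfl, inner_self_eq_norm_sq_to_K] at this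
  replace this := (inner_self_eq_norm_sq_to_K (𝕜 := ℂ) (Vn S T n x)).symm.trans this
  norm_cast at this
  exact (sq_eq_sq₀ (norm_nonneg _) (norm_nonneg _)).1 this

theorem Vn_kill (m n : ℕ) (X : ShiftSp Λ →L[ℂ] ShiftSp Λ)
    (hX : ∀ β : List (Fin d), β.length = m → X * wordOp S β = 0) (x : H) :
    X.rTensor H (Vn S T (n + m) x) = 0 := by
  induction m generalizing X x with
  | zero =>
    have := hX [] rfl
    rw [wordOp_nil, mul_one] at this
    rw [this]; simp
  | succ m ih =>
    rw [← add_assoc, Vn_succ, map_sum, Finset.sum_eq_zero]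
    intro i _
    rw [rT_mul]
    apply ih
    intro β hβ
    rw [mul_assoc, ← wordOp_cons]
    exact hX _ (by simp [hβ])

theorem Vn_star_word (hne : Λ.Nonempty) (hS : IsCr Λ S) {k : ℕ} (hT : CKRel Λ k T) (n : ℕ)
    (β : List (Fin d)) (x : H) :
    (star (wordOp S β)).rTensor H (Vn S T (n + β.length) x) = Vn S T n (star (wordOp T β) x) := by
  induction β generalizing x with
  | nil => simp [wordOp_nil]
  | cons i β ih =>
    rw [wordOp_cons, wordOp_cons, star_mul, star_mul, ← rT_mul, List.length_cons, ← add_assoc,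
      Vn_star_succ hne hS hT, ih]; rfl

theorem Vn_SS (hne : Λ.Nonempty) (hS : IsCr Λ S) {k : ℕ} (hΛ : IsKStepSFT k Λ)
    (hT : CKRel Λ k T) (n : ℕ) (i : Fin d) (x : H) :
    inner ℂ (Vn S T (n + k) x) ((star (S i) * S i).rTensor H (Vn S T (n + k) x))
      = inner ℂ x ((star (T i) * T i) x) := by
  have e : star (S i) * S i = Fd Λ S k i +
      ∑ α ∈ (Eik_finite (Λ := Λ) k i).toFinset, wordOp S α * star (wordOp S α) := by
    simp [Fd]
  have hsum : ∀ (s : Finset (List (Fin d))) (f : List (Fin d) → ShiftSp Λ →L[ℂ] ShiftSp Λ)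
      (u : TensorProduct ℂ (ShiftSp Λ) H),
      (∑ α ∈ s, f α).rTensor H u = ∑ α ∈ s, (f α).rTensor H u := by
    intro s f u
    induction s using Finset.induction_on with
    | empty => simp
    | insert a s ha ih =>
      rw [Finset.sum_insert ha, Finset.sum_insert ha, ContinuousLinearMap.rTensor_add,
        _root_.add_apply, ih]
  rw [e, ContinuousLinearMap.rTensor_add, _root_.add_apply,
    Vn_kill k n _ (fun β hβ => Fd_word hS hΛ i β hβ), zero_add, hsum, inner_sum, hT.eik,
    _root_.sum_apply, inner_sum]
  refine Finset.sum_congr rfl fun α hα => ?_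
  have hl : α.length = k := ((Eik_finite (Λ := Λ) k i).mem_toFinset.1 hα).2.1
  rw [← rT_mul, inner_rT', ← hl, Vn_star_word hne hS hT, Vn_inner hne hS hT, if_pos rfl,
    mul_apply_eq_comp, ContinuousLinearMap.star_eq_adjoint, ContinuousLinearMap.adjoint_inner_left]

theorem Vn_S (hne : Λ.Nonempty) (hS : IsCr Λ S) {k : ℕ} (hΛ : IsKStepSFT k Λ)
    (hT : CKRel Λ k T) (n : ℕ) (hn : k ≤ n) (i : Fin d) (x : H) :
    (S i).rTensor H (Vn S T n x) = Vn S T (n + 1) (T i x) := by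
  obtain ⟨n, rfl⟩ := Nat.exists_eq_add_of_le' hn
  have h1 : inner ℂ ((S i).rTensor H (Vn S T (n + k) x)) ((S i).rTensor H (Vn S T (n + k) x)) =
      inner ℂ (T i x) (T i x) := by
    rw [inner_rT, rT_mul, Vn_SS hne hS hΛ hT, mul_apply_eq_comp,
      ContinuousLinearMap.star_eq_adjoint, ContinuousLinearMap.adjoint_inner_right]
  have h2 : inner ℂ ((S i).rTensor H (Vn S T (n + k) x)) (Vn S T (n + k + 1) (T i x)) =
      inner ℂ (T i x) (T i x) := by
    rw [inner_rT, Vn_star_succ hne hS hT, Vn_inner hne hS hT, if_pos rfl,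
      ContinuousLinearMap.star_eq_adjoint, ContinuousLinearMap.adjoint_inner_right]
  have h3 : inner ℂ (Vn S T (n + k + 1) (T i x)) ((S i).rTensor H (Vn S T (n + k) x)) =
      inner ℂ (T i x) (T i x) := by
    refine (inner_conj_symm (𝕜 := ℂ) (Vn S T (n + k + 1) (T i x))
      ((S i).rTensor H (Vn S T (n + k) x))).symm.trans ?_
    rw [h2, inner_conj_symm]
  have h4 := Vn_inner hne hS hT (n + k + 1) (n + k + 1) (T i x) (T i x)
  rw [if_pos rfl] at h4
  rw [← sub_eq_zero, ← inner_self_eq_zero (𝕜 := ℂ), inner_sub_left, inner_sub_right,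
    inner_sub_right, h1, h2, h3, h4]
  simp

def Wn (S : Fin d → ShiftSp Λ →L[ℂ] ShiftSp Λ) (T : Fin d → H →L[ℂ] H) (N : ℕ) :
    H →L[ℂ] (TensorProduct ℂ (ShiftSp Λ) H) := ∑ n ∈ Finset.range N, Vn S T n

theorem Wn_apply (N : ℕ) (x : H) : Wn S T N x = ∑ n ∈ Finset.range N, Vn S T n x := by
  simp [Wn, _root_.sum_apply]

theorem Wn_norm (hne : Λ.Nonempty) (hS : IsCr Λ S) {k : ℕ} (hT : CKRel Λ k T) (N : ℕ)
    (x : H) : ‖Wn S T N x‖ = √N * ‖x‖ := by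
  have h : inner ℂ (Wn S T N x) (Wn S T N x) = N * inner ℂ x x := by
    rw [Wn_apply, sum_inner]
    simp_rw [inner_sum, Vn_inner hne hS hT, Finset.sum_ite_eq]
    rw [Finset.sum_congr rfl (fun n hn => if_pos hn)]
    simp
  rw [inner_self_eq_norm_sq_to_K] at h
  replace h := (inner_self_eq_norm_sq_to_K (𝕜 := ℂ) (Wn S T N x)).symm.trans h
  refine (sq_eq_sq₀ (norm_nonneg _) (by positivity)).1 ?_
  rw [mul_pow, Real.sq_sqrt (by positivity)]
  apply Complex.ofReal_injective
  push_cast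
  simpa using h

/-- asymptotic intertwining -/
def AI (S : Fin d → ShiftSp Λ →L[ℂ] ShiftSp Λ) (T : Fin d → H →L[ℂ] H)
    (X : ShiftSp Λ →L[ℂ] ShiftSp Λ) (Y : H →L[ℂ] H) : Prop :=
  ∀ x, Filter.Tendsto (fun N : ℕ => (√N)⁻¹ * ‖X.rTensor H (Wn S T N x) - Wn S T N (Y x)‖)
    Filter.atTop (nhds 0)

theorem sqrt_inv_tendsto : Filter.Tendsto (fun N : ℕ => (√(N : ℝ))⁻¹) Filter.atTop (nhds 0) :=
  tendsto_inv_atTop_zero.comp (Real.tendsto_sqrt_atTop.comp tendsto_natCast_atTop_atTop)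

theorem AI_of_bdd {X : ShiftSp Λ →L[ℂ] ShiftSp Λ} {Y : H →L[ℂ] H}
    (h : ∀ x, ∃ C, ∀ N, ‖X.rTensor H (Wn S T N x) - Wn S T N (Y x)‖ ≤ C) : AI S T X Y := by
  intro x
  obtain ⟨C, hC⟩ := h x
  refine squeeze_zero (fun N => by positivity) (fun N => ?_)
    (g := fun N : ℕ => (√(N : ℝ))⁻¹ * C) ?_
  · gcongr; exact hC N
  · simpa using sqrt_inv_tendsto.mul_const C

theorem AI_star (hne : Λ.Nonempty) (hS : IsCr Λ S) {k : ℕ} (hT : CKRel Λ k T) (i : Fin d) :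
    AI S T (star (S i)) (star (T i)) := by
  apply AI_of_bdd
  intro x
  refine ⟨‖(star (S i)).rTensor H‖ * ‖x‖, fun N => ?_⟩
  have : (star (S i)).rTensor H (Wn S T N x) - Wn S T N (star (T i) x) =
      - (star (S i)).rTensor H (Vn S T N x) := by
    rw [Wn_apply, Wn_apply, map_sum, ← Finset.sum_sub_distrib]
    simp_rw [← Vn_star_succ hne hS hT]
    rw [Finset.sum_range_sub', Vn_star_zero hS, zero_sub]
  rw [this, norm_neg, ← Vn_norm hne hS hT N x]
  exact ContinuousLinearMap.le_opNorm _ _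

theorem AI_S (hne : Λ.Nonempty) (hS : IsCr Λ S) {k : ℕ} (hΛ : IsKStepSFT k Λ)
    (hT : CKRel Λ k T) (i : Fin d) : AI S T (S i) (T i) := by
  apply AI_of_bdd
  intro x
  set D : ℕ → TensorProduct ℂ (ShiftSp Λ) H :=
    fun n => (S i).rTensor H (Vn S T n x) - Vn S T (n + 1) (T i x) with hD
  refine ⟨∑ n ∈ Finset.range k, ‖D n‖ + (‖T i x‖ + ‖T i x‖), fun N => ?_⟩
  have e : (S i).rTensor H (Wn S T N x) - Wn S T N (T i x) =
      ∑ n ∈ Finset.range N, D n + (Vn S T N (T i x) - Vn S T 0 (T i x)) := by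
    rw [Wn_apply, Wn_apply, map_sum, ← Finset.sum_range_sub (fun n => Vn S T n (T i x)) N, ← Finset.sum_add_distrib,
      ← Finset.sum_sub_distrib]
    refine Finset.sum_congr rfl fun n _ => ?_
    simp only [hD]; abel
  rw [e]
  refine (norm_add_le _ _).trans (add_le_add ?_ ((norm_sub_le _ _).trans ?_))
  · have h0 : ∀ n, k ≤ n → ‖D n‖ = 0 := fun n hn => by
      rw [norm_eq_zero, hD]; simp only; rw [Vn_S hne hS hΛ hT n hn, sub_self]
    refine (norm_sum_le _ _).trans ?_
    rcases le_total N k with h | h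
    · exact Finset.sum_le_sum_of_subset_of_nonneg (by simpa using h) fun _ _ _ => norm_nonneg _
    · rw [← Finset.sum_range_add_sum_Ico _ h, Finset.sum_eq_zero (s := Finset.Ico k N), add_zero]
      intro n hn
      exact h0 n (Finset.mem_Ico.1 hn).1
  · rw [Vn_norm hne hS hT, Vn_norm hne hS hT]

theorem AI_vac (hS : IsCr Λ S) (u : ShiftSp Λ) :
    AI S T (InnerProductSpace.rankOne ℂ u (ev Λ [])) 0 := by
  apply AI_of_bdd
  intro x
  refine ⟨‖(InnerProductSpace.rankOne ℂ u (ev Λ [])).rTensor H (Vn S T 0 x)‖, fun N => ?_⟩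
  have hk : ∀ n, (InnerProductSpace.rankOne ℂ u (ev Λ [])).rTensor H (Vn S T (n + 1) x) = 0 := by
    intro n
    apply Vn_kill
    intro β hβ
    ext1 v
    rw [mul_apply_eq_comp, InnerProductSpace.rankOne_apply]
    obtain ⟨j, rfl⟩ := List.length_eq_one_iff.1 hβ
    rw [← ContinuousLinearMap.adjoint_inner_left, ← ContinuousLinearMap.star_eq_adjoint,
      star_word_ev_ne hS]
    · simp
    · simp
  rw [_root_.zero_apply, map_zero, sub_zero, Wn_apply, map_sum]
  rcases N with _ | N
  · simp
  · rw [Finset.sum_range_succ', Finset.sum_eq_zero, zero_add]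
    intro n _; exact hk n

theorem AI.add {X X' : ShiftSp Λ →L[ℂ] ShiftSp Λ} {Y Y' : H →L[ℂ] H}
    (h : AI S T X Y) (h' : AI S T X' Y') : AI S T (X + X') (Y + Y') := by
  intro x
  refine squeeze_zero (fun N => by positivity) (fun N => ?_) (by simpa only [add_zero] using (h x).add (h' x))
  rw [← mul_add]
  gcongr
  refine le_trans (le_of_eq ?_) (norm_add_le _ _)
  rw [ContinuousLinearMap.rTensor_add, _root_.add_apply, _root_.add_apply, map_add]
  congr 1; abel

theorem AI.mul {X X' : ShiftSp Λ →L[ℂ] ShiftSp Λ} {Y Y' : H →L[ℂ] H}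
    (h : AI S T X Y) (h' : AI S T X' Y') : AI S T (X * X') (Y * Y') := by
  intro x
  refine squeeze_zero (fun N => by positivity) (fun N => ?_)
    (by simpa only [add_zero, mul_zero] using ((h' x).const_mul ‖X.rTensor H‖).add (h (Y' x)))
  rw [mul_left_comm, ← mul_add]
  gcongr
  refine le_trans ?_ (add_le_add_left (ContinuousLinearMap.le_opNorm _ _) _)
  refine le_trans (le_of_eq ?_) (norm_add_le _ _)
  rw [← rT_mul, mul_apply_eq_comp, map_sub]
  congr 1; abel

theorem AI.smul {X : ShiftSp Λ →L[ℂ] ShiftSp Λ} {Y : H →L[ℂ] H} (c : ℂ)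
    (h : AI S T X Y) : AI S T (c • X) (c • Y) := by
  intro x
  refine squeeze_zero (fun N => by positivity) (fun N => le_of_eq ?_)
    (by simpa only [mul_zero] using (h x).const_mul ‖c‖)
  rw [mul_left_comm, ← norm_smul, ContinuousLinearMap.rTensor_smul, smul_sub]
  simp only [_root_.smul_apply, map_smul]

theorem AI.one : AI S T 1 1 := by
  apply AI_of_bdd
  intro x
  exact ⟨0, fun N => by simp⟩

theorem AI_zero : AI S T 0 0 := by
  apply AI_of_bdd
  intro x
  exact ⟨0, fun N => by simp⟩

theorem AI.closed (hne : Λ.Nonempty) (hS : IsCr Λ S) {k : ℕ} (hT : CKRel Λ k T)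
    {X : ShiftSp Λ →L[ℂ] ShiftSp Λ} {Y : H →L[ℂ] H}
    (h : ∀ ε > 0, ∃ X' Y', AI S T X' Y' ∧ ‖X - X'‖ ≤ ε ∧ ‖Y - Y'‖ ≤ ε) : AI S T X Y := by
  intro x
  rw [Metric.tendsto_atTop]
  intro ε hε
  set η := ε / (4 * (‖x‖ + 1)) with hη
  have hη0 : 0 < η := by positivity
  obtain ⟨X', Y', hA, h1, h2⟩ := h η hη0
  obtain ⟨N₀, hN₀⟩ := Metric.tendsto_atTop.1 (hA x) (ε / 2) (by positivity)
  refine ⟨N₀ + 1, fun N hN => ?_⟩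
  have := hN₀ N (by omega)
  rw [Real.dist_0_eq_abs, abs_of_nonneg (by positivity)] at this ⊢
  have hNp : 0 < √(N : ℝ) := Real.sqrt_pos.2 (by exact_mod_cast (by omega))
  have e : X.rTensor H (Wn S T N x) - Wn S T N (Y x) =
      (X'.rTensor H (Wn S T N x) - Wn S T N (Y' x)) + ((X - X').rTensor H (Wn S T N x)
        - Wn S T N ((Y - Y') x)) := by
    rw [ContinuousLinearMap.rTensor_sub, _root_.sub_apply, _root_.sub_apply, map_sub]
    abel
  have b1 : ‖(X - X').rTensor H (Wn S T N x)‖ ≤ η * (√N * ‖x‖) := by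
    rw [← Wn_norm hne hS hT]
    exact ContinuousLinearMap.le_of_opNorm_le _
      ((ContinuousLinearMap.norm_rTensor_le H _).trans h1) _
  have b2 : ‖Wn S T N ((Y - Y') x)‖ ≤ √N * (η * ‖x‖) := by
    rw [Wn_norm hne hS hT]
    gcongr
    exact ContinuousLinearMap.le_of_opNorm_le _ h2 _
  rw [e]
  calc _ ≤ (√(N : ℝ))⁻¹ * (‖X'.rTensor H (Wn S T N x) - Wn S T N (Y' x)‖ +
        (η * (√N * ‖x‖) + √N * (η * ‖x‖))) := by
        gcongr
        refine (norm_add_le _ _).trans (add_le_add le_rfl ((norm_sub_le _ _).trans ?_))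
        exact add_le_add b1 b2
    _ = (√(N : ℝ))⁻¹ * ‖X'.rTensor H (Wn S T N x) - Wn S T N (Y' x)‖ + 2 * η * ‖x‖ := by
        field_simp; ring
    _ < ε := by
        have : 2 * η * ‖x‖ ≤ ε / 2 := by
          rw [hη]
          rw [mul_div_assoc', div_mul_eq_mul_div, div_le_iff₀ (by positivity)]
          nlinarith [norm_nonneg x]
        linarith

theorem AI.norm_le (hne : Λ.Nonempty) (hS : IsCr Λ S) {k : ℕ} (hT : CKRel Λ k T)
    {X : ShiftSp Λ →L[ℂ] ShiftSp Λ} {Y : H →L[ℂ] H} (h : AI S T X Y) : ‖Y‖ ≤ ‖X‖ := by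
  refine ContinuousLinearMap.opNorm_le_bound _ (norm_nonneg _) fun x => ?_
  have h1 : Filter.Tendsto (fun N : ℕ =>
      (√N)⁻¹ * ‖X.rTensor H (Wn S T N x) - Wn S T N (Y x)‖ + ‖X‖ * ‖x‖)
      Filter.atTop (nhds (‖X‖ * ‖x‖)) := by
    simpa only [zero_add] using (h x).add_const (‖X‖ * ‖x‖)
  refine ge_of_tendsto h1 ?_
  filter_upwards [Filter.eventually_gt_atTop 0] with N hN
  have hNp : 0 < √(N : ℝ) := Real.sqrt_pos.2 (by exact_mod_cast hN)
  have b1 : ‖X.rTensor H (Wn S T N x)‖ ≤ ‖X‖ * (√N * ‖x‖) := by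
    rw [← Wn_norm hne hS hT]
    exact ContinuousLinearMap.le_of_opNorm_le _ (ContinuousLinearMap.norm_rTensor_le H _) _
  have b2 : √N * ‖Y x‖ ≤ ‖X.rTensor H (Wn S T N x) - Wn S T N (Y x)‖ + ‖X‖ * (√N * ‖x‖) := by
    rw [← Wn_norm hne hS hT N (Y x)]
    have := norm_sub_norm_le (Wn S T N (Y x)) (X.rTensor H (Wn S T N x))
    rw [norm_sub_rev] at this
    linarith
  rw [inv_mul_eq_div, div_add' _ _ _ hNp.ne', le_div_iff₀ hNp]
  linarith

theorem AI.word_star (hne : Λ.Nonempty) (hS : IsCr Λ S) {k : ℕ} (hT : CKRel Λ k T)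
    (β : List (Fin d)) : AI S T (star (wordOp S β)) (star (wordOp T β)) := by
  induction β with
  | nil => simpa [wordOp_nil] using AI.one
  | cons i β ih =>
    rw [wordOp_cons, wordOp_cons, star_mul, star_mul]
    exact ih.mul (AI_star hne hS hT i)

theorem AI_rankOne (hne : Λ.Nonempty) (hS : IsCr Λ S) {k : ℕ} (hT : CKRel Λ k T)
    (u : ShiftSp Λ) (β : List (Fin d)) :
    AI S T (InnerProductSpace.rankOne ℂ u (ev Λ β)) 0 := by
  have := (AI_vac (T := T) hS u).mul (AI.word_star hne hS hT β)
  rw [zero_mul] at this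
  convert this using 1
  ext1 v
  rw [mul_apply_eq_comp, InnerProductSpace.rankOne_apply, InnerProductSpace.rankOne_apply,
    ContinuousLinearMap.star_eq_adjoint, ContinuousLinearMap.adjoint_inner_right, wordOp_ev hS,
    List.append_nil]

theorem AI_compact_star (hne : Λ.Nonempty) (hS : IsCr Λ S) {k : ℕ} (hT : CKRel Λ k T)
    (X : ShiftSp Λ →L[ℂ] ShiftSp Λ) (hX : IsCompactOperator X) : AI S T (star X) 0 := by
  have this : ∀ F : Finset ↥(lang Λ), AI S T (∑ γ ∈ F, star X *
      star (InnerProductSpace.rankOne ℂ (ev Λ γ) (ev Λ γ))) 0 := by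
    intro F
    induction F using Finset.induction_on with
    | empty => simpa only [Finset.sum_empty] using AI_zero
    | insert a s ha ih =>
      rw [Finset.sum_insert ha]
      have h := AI_rankOne hne hS hT (star X (ev Λ a)) (a : List (Fin d))
      have e : star X * star (InnerProductSpace.rankOne ℂ (ev Λ a) (ev Λ a)) =
          InnerProductSpace.rankOne ℂ (star X (ev Λ a)) (ev Λ a) := by
        ext1 v
        rw [mul_apply_eq_comp, ContinuousLinearMap.star_eq_adjoint (InnerProductSpace.rankOne ℂ _ _),
          InnerProductSpace.adjoint_rankOne,
          InnerProductSpace.rankOne_apply, InnerProductSpace.rankOne_apply, map_smul]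
      rw [e]
      simpa only [add_zero] using h.add ih
  apply AI.closed hne hS hT
  intro ε hε
  obtain ⟨F, hF⟩ := compact_approx X hX hε
  refine ⟨star (PF Λ F * X), 0, ?_, ?_, by simpa using hε.le⟩
  · rw [star_mul, PF, star_sum, Finset.mul_sum]
    exact this F
  · rw [← star_sub, norm_star]; exact hF

end rep

section rep2
variable {d : ℕ} {Λ : Set (ℤ → Fin d)} {S : Fin d → ShiftSp Λ →L[ℂ] ShiftSp Λ}
  {H : Type} [NormedAddCommGroup H] [InnerProductSpace ℂ H] [CompleteSpace H]
  {T : Fin d → H →L[ℂ] H}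

theorem AI.sub {X X' : ShiftSp Λ →L[ℂ] ShiftSp Λ} {Y Y' : H →L[ℂ] H}
    (h : AI S T X Y) (h' : AI S T X' Y') : AI S T (X - X') (Y - Y') := by
  have := h.add (h'.smul (-1))
  simpa only [neg_smul, one_smul, ← sub_eq_add_neg] using this

theorem AI.uniq (hne : Λ.Nonempty) (hS : IsCr Λ S) {k : ℕ} (hT : CKRel Λ k T)
    {X : ShiftSp Λ →L[ℂ] ShiftSp Λ} {Y Y' : H →L[ℂ] H}
    (h : AI S T X Y) (h' : AI S T X Y') : Y = Y' := by
  have := (h.sub h').norm_le hne hS hT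
  rw [sub_self, norm_zero, norm_le_zero_iff] at this
  exact sub_eq_zero.1 this

/-- two sided asymptotic intertwining -/
def AI2 (S : Fin d → ShiftSp Λ →L[ℂ] ShiftSp Λ) (T : Fin d → H →L[ℂ] H)
    (X : ShiftSp Λ →L[ℂ] ShiftSp Λ) (Y : H →L[ℂ] H) : Prop :=
  AI S T X Y ∧ AI S T (star X) (star Y)

theorem AI2.add {X X' : ShiftSp Λ →L[ℂ] ShiftSp Λ} {Y Y' : H →L[ℂ] H}
    (h : AI2 S T X Y) (h' : AI2 S T X' Y') : AI2 S T (X + X') (Y + Y') :=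
  ⟨h.1.add h'.1, by rw [star_add, star_add]; exact h.2.add h'.2⟩

theorem AI2.mul {X X' : ShiftSp Λ →L[ℂ] ShiftSp Λ} {Y Y' : H →L[ℂ] H}
    (h : AI2 S T X Y) (h' : AI2 S T X' Y') : AI2 S T (X * X') (Y * Y') :=
  ⟨h.1.mul h'.1, by rw [star_mul, star_mul]; exact h'.2.mul h.2⟩

theorem AI2.star {X : ShiftSp Λ →L[ℂ] ShiftSp Λ} {Y : H →L[ℂ] H}
    (h : AI2 S T X Y) : AI2 S T (star X) (star Y) :=
  ⟨h.2, by rw [star_star, star_star]; exact h.1⟩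

theorem AI2.algMap (c : ℂ) : AI2 S T (algebraMap ℂ _ c) (algebraMap ℂ _ c) := by
  have h : ∀ c : ℂ, AI S T (algebraMap ℂ _ c) (algebraMap ℂ _ c) := fun c => by
    rw [Algebra.algebraMap_eq_smul_one, Algebra.algebraMap_eq_smul_one]
    exact AI.one.smul c
  refine ⟨h c, ?_⟩
  rw [← algebraMap_star_comm, ← algebraMap_star_comm]
  exact h _

/-- operators having an asymptotic partner -/
def RG (S : Fin d → ShiftSp Λ →L[ℂ] ShiftSp Λ) (T : Fin d → H →L[ℂ] H) :
    StarSubalgebra ℂ (ShiftSp Λ →L[ℂ] ShiftSp Λ) where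
  carrier := {X | ∃ Y, AI2 S T X Y}
  mul_mem' := fun ⟨_, h⟩ ⟨_, h'⟩ => ⟨_, h.mul h'⟩
  add_mem' := fun ⟨_, h⟩ ⟨_, h'⟩ => ⟨_, h.add h'⟩
  algebraMap_mem' := fun c => ⟨_, AI2.algMap c⟩
  star_mem' := fun ⟨_, h⟩ => ⟨_, h.star⟩

theorem RG_closed (hne : Λ.Nonempty) (hS : IsCr Λ S) {k : ℕ} (hT : CKRel Λ k T) :
    IsClosed (RG S T : Set (ShiftSp Λ →L[ℂ] ShiftSp Λ)) := by
  refine isClosed_of_closure_subset fun X hX => ?_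
  obtain ⟨Xn, hXn, hlim⟩ := mem_closure_iff_seq_limit.1 hX
  choose Yn hYn using hXn
  have hc : CauchySeq Yn := by
    rw [Metric.cauchySeq_iff]
    intro ε hε
    obtain ⟨N, hN⟩ := Metric.cauchySeq_iff.1 hlim.cauchySeq ε hε
    refine ⟨N, fun m hm n hn => lt_of_le_of_lt ?_ (hN m hm n hn)⟩
    rw [dist_eq_norm, dist_eq_norm]
    exact ((hYn m).1.sub (hYn n).1).norm_le hne hS hT
  obtain ⟨Y, hY⟩ := cauchySeq_tendsto_of_complete hc
  have key : ∀ ε > 0, ∃ n, ‖X - Xn n‖ ≤ ε ∧ ‖Y - Yn n‖ ≤ ε := by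
    intro ε hε
    obtain ⟨N, hN⟩ := Metric.tendsto_atTop.1 hlim ε hε
    obtain ⟨M, hM⟩ := Metric.tendsto_atTop.1 hY ε hε
    refine ⟨max N M, ?_, ?_⟩
    · rw [← dist_eq_norm, dist_comm]; exact (hN _ (le_max_left _ _)).le
    · rw [← dist_eq_norm, dist_comm]; exact (hM _ (le_max_right _ _)).le
  refine ⟨Y, AI.closed hne hS hT fun ε hε => ?_, AI.closed hne hS hT fun ε hε => ?_⟩
  · obtain ⟨n, h1, h2⟩ := key ε hε
    exact ⟨_, _, (hYn n).1, h1, h2⟩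
  · obtain ⟨n, h1, h2⟩ := key ε hε
    refine ⟨_, _, (hYn n).2, ?_, ?_⟩
    · rw [← star_sub, norm_star]; exact h1
    · rw [← star_sub, norm_star]; exact h2

theorem genAlg_le (hne : Λ.Nonempty) (hS : IsCr Λ S) {k : ℕ} (hΛ : IsKStepSFT k Λ)
    (hT : CKRel Λ k T) : genAlg Λ S ≤ RG S T := by
  refine StarSubalgebra.topologicalClosure_minimal (StarAlgebra.adjoin_le ?_)
    (RG_closed hne hS hT)
  rintro _ ⟨i, rfl⟩
  exact ⟨T i, AI_S hne hS hΛ hT i, AI_star hne hS hT i⟩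

theorem exists_rep (hne : Λ.Nonempty) (hS : IsCr Λ S) {k : ℕ} (hΛ : IsKStepSFT k Λ)
    (hT : CKRel Λ k T) : ∃ π : ↥(genAlg Λ S) →⋆ₐ[ℂ] (H →L[ℂ] H),
      ∀ a : ↥(genAlg Λ S), AI2 S T a (π a) := by
  have hex : ∀ a : ↥(genAlg Λ S), ∃ Y, AI2 S T a Y := fun a => genAlg_le hne hS hΛ hT a.2
  choose f hf using hex
  have hu : ∀ (a : ↥(genAlg Λ S)) (Y : H →L[ℂ] H), AI2 S T a Y → f a = Y :=
    fun a Y h => AI.uniq hne hS hT (hf a).1 h.1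
  have hc : ∀ c : ℂ, f (algebraMap ℂ _ c) = algebraMap ℂ _ c := fun c =>
    hu _ _ (AI2.algMap c)
  exact ⟨{ toFun := f
           map_one' := by simpa only [map_one] using hc 1
           map_zero' := by simpa only [map_zero] using hc 0
           map_mul' := fun a b => hu _ _ ((hf a).mul (hf b))
           map_add' := fun a b => hu _ _ ((hf a).add (hf b))
           commutes' := hc
           map_star' := fun a => hu _ _ (hf a).star }, hf⟩

theorem S_mem (i : Fin d) : S i ∈ genAlg Λ S :=
  StarSubalgebra.le_topologicalClosure _ (StarAlgebra.subset_adjoin ℂ _ ⟨i, rfl⟩)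

/-- generators inside the algebra -/
def Sg (S : Fin d → ShiftSp Λ →L[ℂ] ShiftSp Λ) (i : Fin d) : ↥(genAlg Λ S) := ⟨S i, S_mem i⟩

theorem coe_word (α : List (Fin d)) :
    ((wordOp (Sg S) α : ↥(genAlg Λ S)) : ShiftSp Λ →L[ℂ] ShiftSp Λ) = wordOp S α := by
  induction α with
  | nil => simp only [wordOp_nil]; rfl
  | cons i α ih => rw [wordOp_cons, wordOp_cons, ← ih]; rfl

theorem map_word (π : ↥(genAlg Λ S) →⋆ₐ[ℂ] (H →L[ℂ] H)) (h : ∀ i, π (Sg S i) = T i)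
    (α : List (Fin d)) : π (wordOp (Sg S) α) = wordOp T α := by
  induction α with
  | nil => simp only [wordOp_nil, map_one]
  | cons i α ih => rw [wordOp_cons, wordOp_cons, map_mul, ih, h]

theorem coe_Fd (k : ℕ) (i : Fin d) :
    ((star (Sg S i) * Sg S i - ∑ α ∈ (Eik_finite (Λ := Λ) k i).toFinset,
      wordOp (Sg S) α * star (wordOp (Sg S) α) : ↥(genAlg Λ S)) :
      ShiftSp Λ →L[ℂ] ShiftSp Λ) = Fd Λ S k i := by
  have h0 : ∀ a : ↥(genAlg Λ S), (a : ShiftSp Λ →L[ℂ] ShiftSp Λ) = (genAlg Λ S).subtype a :=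
    fun _ => rfl
  rw [h0]
  have h1 : (genAlg Λ S).subtype (Sg S i) = S i := rfl
  have h2 : ∀ α, (genAlg Λ S).subtype (wordOp (Sg S) α) = wordOp S α := coe_word
  rw [map_sub, map_mul, map_star, h1, map_sum, Fd]
  congr 1
  refine Finset.sum_congr rfl fun α _ => ?_
  rw [map_mul, map_star, h2]

theorem rel_of_rep (hS : IsCr Λ S) {k : ℕ} (hΛ : IsKStepSFT k Λ)
    (π : ↥(genAlg Λ S) →⋆ₐ[ℂ] (H →L[ℂ] H)) (h : ∀ i, π (Sg S i) = T i)
    (hK : ∀ a : ↥(genAlg Λ S),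
          IsCompactOperator ⇑(a : ShiftSp Λ →L[ℂ] ShiftSp Λ) → π a = 0) :
    CKRel Λ k T ∧ ∀ i j : Fin d, i ≠ j → star (T i) * T j = 0 := by
  refine ⟨⟨?_, ?_, ?_⟩, ?_⟩
  · intro α hα
    rw [← map_word π h]
    have : wordOp (Sg S) α = 0 := Subtype.ext (by rw [coe_word, word_not_mem hS hα]; rfl)
    rw [this, map_zero]
  · have := hK (1 - ∑ i, Sg S i * star (Sg S i)) (by
      have e : ((1 - ∑ i, Sg S i * star (Sg S i) : ↥(genAlg Λ S)) :
          ShiftSp Λ →L[ℂ] ShiftSp Λ) = 1 - ∑ i, S i * star (S i) := by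
        push_cast; rfl
      rw [e]
      exact isCompact_of_ev _ 1 fun w hw hl => sum_range_ev hS w hw (by rintro rfl; simp at hl))
    rw [map_sub, map_one, map_sum, sub_eq_zero] at this
    simp only [map_mul, map_star, h] at this
    exact this.symm
  · intro i
    have := hK (star (Sg S i) * Sg S i - ∑ α ∈ (Eik_finite (Λ := Λ) k i).toFinset,
        wordOp (Sg S) α * star (wordOp (Sg S) α)) (by
      have e : ((star (Sg S i) * Sg S i - ∑ α ∈ (Eik_finite (Λ := Λ) k i).toFinset,
          wordOp (Sg S) α * star (wordOp (Sg S) α) : ↥(genAlg Λ S)) :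
          ShiftSp Λ →L[ℂ] ShiftSp Λ) = Fd Λ S k i := by
        exact coe_Fd k i
      rw [e]
      exact isCompact_of_ev _ k fun w hw hl => Fd_ev hS hΛ i w hw hl)
    rw [map_sub, map_sum, sub_eq_zero] at this
    simp only [map_mul, map_star, h, map_word π h] at this
    exact this
  · intro i j hij
    rw [← h, ← h, ← map_star, ← map_mul]
    have : star (Sg S i) * Sg S j = 0 := Subtype.ext (star_mul_ne hS hij)
    rw [this, map_zero]

theorem rep_uniq (π₁ π₂ : ↥(genAlg Λ S) →⋆ₐ[ℂ] (H →L[ℂ] H))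
    (h₁ : ∀ i, π₁ (Sg S i) = T i) (h₂ : ∀ i, π₂ (Sg S i) = T i) : π₁ = π₂ := by
  have hcl : IsClosed (genAlg Λ S : Set (ShiftSp Λ →L[ℂ] ShiftSp Λ)) :=
    StarSubalgebra.isClosed_topologicalClosure _
  have hcont : ∀ π : ↥(genAlg Λ S) →⋆ₐ[ℂ] (H →L[ℂ] H), Continuous π := fun π =>
    AddMonoidHomClass.continuous_of_bound π 1 fun a => by
      rw [one_mul]; exact NonUnitalStarAlgHom.norm_apply_le π a
  refine StarAlgHom.ext_topologicalClosure (hcont π₁) (hcont π₂) ?_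
  refine StarAlgHom.ext_adjoin ?_
  rintro ⟨x, hx⟩ ⟨i, hi⟩
  simp only at hi
  subst hi
  exact (h₁ i).trans (h₂ i).symm

end rep2

/-- **The representation theory of Matsumoto's subshift C*-algebra for an SFT.**
For a nonempty `k`-step SFT `Λ`, a tuple `(T₁,…,T_d)` of operators on a Hilbert space `H`
arises from a unital `*`-representation of `𝒯_Λ` annihilating the compact operators (i.e. a
representation of `O_Λ = 𝒯_Λ/𝒦`) if and only if it satisfies the relations
`T^α = 0 (α ∉ Λ*)`, `T_i*T_j = 0 (i ≠ j)`, `Σ T_iT_i* = 1`,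
`T_i*T_i = Σ_{α ∈ E_i^k} T^α(T^α)*`; moreover such a representation is uniquely determined
by `T₁,…,T_d`. -/
theorem stmt19 (d k : ℕ) (hd : 1 ≤ d) (hk : 1 ≤ k)
    (Λ : Set (ℤ → Fin d)) (hΛ : IsKStepSFT k Λ) (hne : Λ.Nonempty)
    (S : Fin d → ShiftSp Λ →L[ℂ] ShiftSp Λ)
    (hS1 : ∀ (i : Fin d) (γ : ↥(lang Λ)) (h : (i :: (γ : List (Fin d))) ∈ lang Λ),
      S i (eVec Λ γ) = eVec Λ ⟨i :: (γ : List (Fin d)), h⟩)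
    (hS0 : ∀ (i : Fin d) (γ : ↥(lang Λ)), (i :: (γ : List (Fin d))) ∉ lang Λ →
      S i (eVec Λ γ) = 0)
    {H : Type} [NormedAddCommGroup H] [InnerProductSpace ℂ H] [CompleteSpace H]
    (T : Fin d → H →L[ℂ] H) :
    ((∃ π : ↥(genAlg Λ S) →⋆ₐ[ℂ] (H →L[ℂ] H),
        (∀ (a : ↥(genAlg Λ S)) (i : Fin d),
          (a : ShiftSp Λ →L[ℂ] ShiftSp Λ) = S i → π a = T i) ∧
        (∀ a : ↥(genAlg Λ S),
          IsCompactOperator ⇑(a : ShiftSp Λ →L[ℂ] ShiftSp Λ) → π a = 0)) ↔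
      ((∀ α : List (Fin d), α ∉ lang Λ → wordOp T α = 0) ∧
       (∀ i j : Fin d, i ≠ j → star (T i) * T j = 0) ∧
       ((∑ i : Fin d, T i * star (T i)) = 1) ∧
       (∀ i : Fin d,
         star (T i) * T i = ∑ᶠ α ∈ Eik Λ k i, wordOp T α * star (wordOp T α)))) ∧
    (∀ π₁ π₂ : ↥(genAlg Λ S) →⋆ₐ[ℂ] (H →L[ℂ] H),
      (∀ (a : ↥(genAlg Λ S)) (i : Fin d),
        (a : ShiftSp Λ →L[ℂ] ShiftSp Λ) = S i → π₁ a = T i) →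
      (∀ a : ↥(genAlg Λ S),
        IsCompactOperator ⇑(a : ShiftSp Λ →L[ℂ] ShiftSp Λ) → π₁ a = 0) →
      (∀ (a : ↥(genAlg Λ S)) (i : Fin d),
        (a : ShiftSp Λ →L[ℂ] ShiftSp Λ) = S i → π₂ a = T i) →
      (∀ a : ↥(genAlg Λ S),
        IsCompactOperator ⇑(a : ShiftSp Λ →L[ℂ] ShiftSp Λ) → π₂ a = 0) →
      π₁ = π₂) := by
  have hS : IsCr Λ S := isCr_of hS1 hS0
  refine ⟨⟨?_, ?_⟩, ?_⟩
  · rintro ⟨π, h1, h2⟩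
    obtain ⟨hT, h4⟩ := rel_of_rep hS hΛ π (fun i => h1 (Sg S i) i rfl) h2
    refine ⟨hT.word, h4, hT.sum, fun i => ?_⟩
    rw [hT.eik i, finsum_mem_eq_finite_toFinset_sum _ (Eik_finite (Λ := Λ) k i)]
  · rintro ⟨h1, _, h3, h4⟩
    have hT : CKRel Λ k T := ⟨h1, h3, fun i => by
      rw [h4 i, finsum_mem_eq_finite_toFinset_sum _ (Eik_finite (Λ := Λ) k i)]⟩
    obtain ⟨π, hπ⟩ := exists_rep hne hS hΛ hT
    refine ⟨π, fun a i ha => ?_, fun a ha => ?_⟩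
    · have h := (hπ a).1
      rw [ha] at h
      exact AI.uniq hne hS hT h (AI_S hne hS hΛ hT i)
    · have h := AI.uniq hne hS hT (hπ a).2 (AI_compact_star hne hS hT _ ha)
      exact star_eq_zero.1 h
  · intro π₁ π₂ h₁ _ h₂ _
    exact rep_uniq π₁ π₂ (fun i => h₁ (Sg S i) i rfl) (fun i => h₂ (Sg S i) i rfl)
end
end
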